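/- Let b ≥ 2 be an integer, let a = (a_j)_{j≥1} be a nondecreasing sequence of real weights, and let 1 < p < 2. Then the following three statements are equivalent: (a) liminf_{j→∞} a_j / j^{(p−1)/(2−p)} > 0; (b) there exist constants A, C, c > 0 such that e(n, s, W_{s,a}) ≤ C·exp(A·s)·exp(−c·(log n)^p) for all s, n ∈ ℕ; (c) there exist constants C, c > 0 such that e(n, s, W_{s,a}) ≤ C·exp(−c·(log n)^p) for all s, n ∈ ℕ. -/

import Mathlib

open MeasureTheory Matrix Filter
open scoped ENNReal BigOperators Topology

noncomputable section

/-- The `b`-adic digit of `k : ℕ` at place `b^i` (i.e. the `(i+1)`-st digit). -/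
def natDigit (b k i : ℕ) : ℕ := k / b ^ i % b

/-- The `(i+1)`-st `b`-adic digit of a real number `x ∈ [0,1)`
(using the expansion in which infinitely many digits differ from `b-1`). -/
def realDigit (b : ℕ) (x : ℝ) (i : ℕ) : ℕ := (⌊x * (b : ℝ) ^ (i + 1)⌋ % (b : ℤ)).toNat

/-- The `k`-th one-dimensional `b`-adic Walsh function. -/
def wal1 (b k : ℕ) (x : ℝ) : ℂ :=
  Complex.exp (2 * Real.pi * Complex.I / (b : ℂ) *
    ((∑ i ∈ Finset.range k, natDigit b k i * realDigit b x i : ℕ) : ℂ))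

/-- The `k`-th `s`-dimensional `b`-adic Walsh function. -/
def wal (b : ℕ) {s : ℕ} (k : Fin s → ℕ) (x : Fin s → ℝ) : ℂ :=
  ∏ j, wal1 b (k j) (x j)

/-- The unit cube `[0,1)^s`. -/
def unitCube (s : ℕ) : Set (Fin s → ℝ) := Set.univ.pi fun _ => Set.Ico (0 : ℝ) 1

/-- The `k`-th Walsh coefficient of `f`. -/
def walshCoeff (b : ℕ) {s : ℕ} (f : (Fin s → ℝ) → ℝ) (k : Fin s → ℕ) : ℂ :=
  ∫ x in unitCube s, (f x : ℂ) * (starRingEnd ℂ) (wal b k x)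

/-- The generalized Dick weight `μ_a(k)`, one-dimensional case. -/
def dickWt (b : ℕ) (a : ℝ) (k : ℕ) : ℝ :=
  ∑ i ∈ Finset.range k, if natDigit b k i ≠ 0 then ((i : ℝ) + 1 + a) else 0

/-- The generalized Dick weight `μ_a(k)` for vectors. -/
def dickWtV (b : ℕ) {s : ℕ} (a : Fin s → ℝ) (k : Fin s → ℕ) : ℝ :=
  ∑ j, dickWt b (a j) (k j)

/-- The modified Dick weight `μ'_a(k)`, one-dimensional case. -/
def mdickWt (b : ℕ) (a : ℝ) (k : ℕ) : ℝ :=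
  ∑ i ∈ Finset.range k, if natDigit b k i ≠ 0 then max ((i : ℝ) + 1 + a) 1 else 0

/-- The modified Dick weight `μ'_a(k)` for vectors. -/
def mdickWtV (b : ℕ) {s : ℕ} (a : Fin s → ℝ) (k : Fin s → ℕ) : ℝ :=
  ∑ j, mdickWt b (a j) (k j)

/-- Digitwise subtraction modulo `b` of natural numbers. -/
def dsub (b k k' : ℕ) : ℕ :=
  ∑ i ∈ Finset.range (k + k' + 1), ((natDigit b k i + (b - natDigit b k' i)) % b) * b ^ i

/-- The integral of `f` over the unit cube. -/
def intBox (s : ℕ) (f : (Fin s → ℝ) → ℝ) : ℝ := ∫ x in unitCube s, f x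

/-- Membership in the Walsh space `W_{s,a}`: `f` equals its (convergent) Walsh series
and has finite norm. -/
def MemW (b : ℕ) {s : ℕ} (a : Fin s → ℝ) (f : (Fin s → ℝ) → ℝ) : Prop :=
  (∀ x ∈ unitCube s, HasSum (fun k : Fin s → ℕ => walshCoeff b f k * wal b k x) ((f x : ℂ))) ∧
  BddAbove (Set.range fun k : Fin s → ℕ => ‖walshCoeff b f k‖ * (b : ℝ) ^ dickWtV b a k)

/-- The norm of the Walsh space `W_{s,a}`. -/
def normW (b : ℕ) {s : ℕ} (a : Fin s → ℝ) (f : (Fin s → ℝ) → ℝ) : ℝ :=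
  ⨆ k : Fin s → ℕ, ‖walshCoeff b f k‖ * (b : ℝ) ^ dickWtV b a k

/-- Membership in the modified Walsh space `W'_{s,a}`. -/
def MemW' (b : ℕ) {s : ℕ} (a : Fin s → ℝ) (f : (Fin s → ℝ) → ℝ) : Prop :=
  (∀ x ∈ unitCube s, HasSum (fun k : Fin s → ℕ => walshCoeff b f k * wal b k x) ((f x : ℂ))) ∧
  BddAbove (Set.range fun k : Fin s → ℕ => ‖walshCoeff b f k‖ * (b : ℝ) ^ mdickWtV b a k)

/-- The norm of the modified Walsh space `W'_{s,a}`. -/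
def normW' (b : ℕ) {s : ℕ} (a : Fin s → ℝ) (f : (Fin s → ℝ) → ℝ) : ℝ :=
  ⨆ k : Fin s → ℕ, ‖walshCoeff b f k‖ * (b : ℝ) ^ mdickWtV b a k

/-- The worst-case error of the algorithm `A` over the unit ball of `(H, N)`. -/
def worstErr (s : ℕ) (H : Set ((Fin s → ℝ) → ℝ)) (N : ((Fin s → ℝ) → ℝ) → ℝ)
    (A : ((Fin s → ℝ) → ℝ) → ℝ) : ℝ≥0∞ :=
  ⨆ (f : (Fin s → ℝ) → ℝ) (_ : f ∈ H) (_ : N f ≤ 1), ENNReal.ofReal |intBox s f - A f|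

/-- The `n`-th minimal worst-case error over all algorithms using `n` function values
at points of the unit cube. -/
def minErr (n s : ℕ) (H : Set ((Fin s → ℝ) → ℝ)) (N : ((Fin s → ℝ) → ℝ) → ℝ) : ℝ≥0∞ :=
  ⨅ (t : Fin n → Fin s → ℝ) (_ : ∀ i, t i ∈ unitCube s) (φ : (Fin n → ℝ) → ℝ),
    worstErr s H N fun f => φ fun i => f (t i)

/-- Partial derivative in the `j`-th coordinate. -/
def pd {s : ℕ} (j : Fin s) (f : (Fin s → ℝ) → ℝ) : (Fin s → ℝ) → ℝ :=
  fun x => deriv (fun t => f (Function.update x j t)) (x j)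

/-- The mixed partial derivative `f^{(α)}`. -/
def mpd {s : ℕ} (α : Fin s → ℕ) (f : (Fin s → ℝ) → ℝ) : (Fin s → ℝ) → ℝ :=
  (List.finRange s).foldr (fun j g => (pd j)^[α j] g) f

/-- Membership in the space `S_{s,u}` of smooth functions. -/
def MemS {s : ℕ} (u : Fin s → ℝ) (f : (Fin s → ℝ) → ℝ) : Prop :=
  ContDiff ℝ (⊤ : ℕ∞) f ∧
  BddAbove (Set.range fun α : Fin s → ℕ =>
    (∫ x in unitCube s, |mpd α f x|) / ∏ j, u j ^ α j)

/-- The norm of the space `S_{s,u}`. -/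
def normS {s : ℕ} (u : Fin s → ℝ) (f : (Fin s → ℝ) → ℝ) : ℝ :=
  ⨆ α : Fin s → ℕ, (∫ x in unitCube s, |mpd α f x|) / ∏ j, u j ^ α j

/-- The column vector of the first `m` `b`-adic digits of `k`. -/
def trunc (b m k : ℕ) : Fin m → ZMod b := fun i => (natDigit b k (i : ℕ) : ZMod b)

/-- The `m`-th point of the digital net determined by generating matrices `G`. -/
def netPoint (b : ℕ) {s l d : ℕ} (G : Fin s → Matrix (Fin l) (Fin d) (ZMod b)) (m : ℕ) :
    Fin s → ℝ :=
  fun j => ∑ i : Fin l, (((G j).mulVec (trunc b d m)) i).val / (b : ℝ) ^ ((i : ℕ) + 1)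

/-- The dual net of the digital net determined by `G`. -/
def dualNet (b : ℕ) {s l d : ℕ} (G : Fin s → Matrix (Fin l) (Fin d) (ZMod b)) :
    Set (Fin s → ℕ) :=
  {k | ∑ j, (G j)ᵀ.mulVec (trunc b l (k j)) = 0}

/-- The QMC algorithm given by the digital net with generating matrices `G`. -/
def qmcNet (b : ℕ) {s l d : ℕ} (G : Fin s → Matrix (Fin l) (Fin d) (ZMod b))
    (f : (Fin s → ℝ) → ℝ) : ℝ :=
  ((b : ℝ) ^ d)⁻¹ * ∑ m ∈ Finset.range (b ^ d), f (netPoint b G m)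

/-- `n_j = #{i ∈ ℕ : i + a ≤ 1}` (with `i` ranging over positive integers). -/
def negCount (a : ℝ) : ℕ := Set.ncard {i : ℕ | 0 < i ∧ (i : ℝ) + a ≤ 1}

/-!
Lower bound: when there are fewer nodes than elementary `b`-adic cubes of a given size, some cube
contains no node. Its indicator is a Walsh polynomial vanishing at all nodes, so no algorithm
distinguishes a multiple of it from the negative of that multiple; comparing the resulting error
with (b) at suitable resolutions forces the growth of `a`.

Upper bound: the moment vector of the finitely many Walsh functions with `μ_a(k) ≤ T` has its mean
in the convex hull of its values, so by Carathéodory's theorem a quadrature rule with few nodes and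
nonnegative weights is exact on them. Rankin's trick bounds both the number of such `k` and the
remaining tail by the series `∑ₖ b ^ (-t μ_a(k))`, which factors over coordinates and digits.
-/

section Digits

variable {b : ℕ}

lemma natDigit_lt (hb : 0 < b) (k i : ℕ) : natDigit b k i < b :=
  Nat.mod_lt _ hb

lemma natDigit_eq_zero {k i : ℕ} (hk : k < b ^ i) : natDigit b k i = 0 := by
  simp [natDigit, Nat.div_eq_of_lt hk]

lemma coe_finFunctionFinEquiv_symm_apply {m : ℕ} (k : Fin (b ^ m)) (i : Fin m) :
    (finFunctionFinEquiv.symm k i : ℕ) = natDigit b k i :=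
  rfl

lemma eq_of_natDigit_eq {m k k' : ℕ} (hk : k < b ^ m) (hk' : k' < b ^ m)
    (h : ∀ i < m, natDigit b k i = natDigit b k' i) : k = k' := by
  have digits_eq : finFunctionFinEquiv.symm ⟨k, hk⟩ = finFunctionFinEquiv.symm ⟨k', hk'⟩ :=
    funext fun i => Fin.ext (h i i.2)
  exact congrArg Fin.val (finFunctionFinEquiv.symm.injective digits_eq)

lemma sum_range_natDigit_eq {M : Type*} [AddCommMonoid M] (hb : 1 < b) {k m : ℕ} (hk : k < b ^ m)
    {g : ℕ → ℕ → M} (hg : ∀ i, g i 0 = 0) :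
    ∑ i ∈ Finset.range k, g i (natDigit b k i) = ∑ i ∈ Finset.range m, g i (natDigit b k i) := by
  have sum_eq_of_le {m n : ℕ} (hmn : m ≤ n) (hm : k < b ^ m) :
      ∑ i ∈ Finset.range m, g i (natDigit b k i) = ∑ i ∈ Finset.range n, g i (natDigit b k i) := by
    refine Finset.sum_subset (Finset.range_mono hmn) fun i _ hi => ?_
    have hmi : m ≤ i := by simpa using hi
    rw [natDigit_eq_zero (hm.trans_le (Nat.pow_le_pow_right hb.le hmi)), hg]
  rcases le_total k m with h | h
  · exact sum_eq_of_le h (Nat.lt_pow_self hb)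
  · exact (sum_eq_of_le h hk).symm

lemma sum_range_pow_prod_natDigit {R : Type*} [CommSemiring R] (b m : ℕ) (g : ℕ → ℕ → R) :
    ∑ k ∈ Finset.range (b ^ m), ∏ i ∈ Finset.range m, g i (natDigit b k i) =
      ∏ i ∈ Finset.range m, ∑ d ∈ Finset.range b, g i d := by
  simp only [Finset.sum_range, Finset.prod_range, ← coe_finFunctionFinEquiv_symm_apply]
  rw [Equiv.sum_comp finFunctionFinEquiv.symm fun d : Fin m → Fin b => ∏ i : Fin m, g i (d i),
    Finset.prod_univ_sum, Fintype.piFinset_univ]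

lemma realDigit_lt (hb : 0 < b) (x : ℝ) (i : ℕ) : realDigit b x i < b := by
  have := Int.emod_lt_of_pos ⌊x * (b : ℝ) ^ (i + 1)⌋ (Int.natCast_pos.2 hb)
  grind [realDigit]

lemma realDigit_eq_natDigit_floor (hb : 0 < b) {m i : ℕ} (hi : i < m) {x : ℝ} (hx : 0 ≤ x) :
    realDigit b x i = natDigit b ⌊x * (b ^ m : ℕ)⌋₊ (m - 1 - i) := by
  have scale : x * (b : ℝ) ^ (i + 1) = x * (b ^ m : ℕ) / (b ^ (m - 1 - i) : ℕ) := by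
    push_cast
    rw [eq_div_iff (by positivity), mul_assoc, ← pow_add]
    congr 2
    omega
  rw [realDigit, natDigit, ← Nat.floor_div_natCast, ← scale,
    ← Int.natCast_floor_eq_floor (by positivity)]
  norm_cast

lemma measurable_realDigit (b i : ℕ) : Measurable fun x : ℝ => realDigit b x i :=
  (measurable_from_top (f := fun z : ℤ => (z % (b : ℤ)).toNat)).comp
    (Int.measurable_floor.comp (measurable_id.mul_const _))

end Digits

section DigitIntegrals

lemma eqOn_comp_natFloor_Ioo {α : Type*} (F : ℕ → α) (m : ℕ) :
    Set.EqOn (fun y : ℝ => F ⌊y⌋₊) (fun _ => F m) (Set.Ioo (m : ℝ) ((m + 1 : ℕ) : ℝ)) := by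
  intro y hy
  have hfloor : ⌊y⌋₊ = m :=
    (Nat.floor_eq_iff ((Nat.cast_nonneg m).trans hy.1.le)).2 ⟨hy.1.le, by simpa using hy.2⟩
  simp only [hfloor]

lemma intervalIntegrable_comp_natFloor {E : Type*} [NormedAddCommGroup E] (F : ℕ → E) (m : ℕ) :
    IntervalIntegrable (fun y : ℝ => F ⌊y⌋₊) volume (m : ℝ) ((m + 1 : ℕ) : ℝ) := by
  rw [intervalIntegrable_iff_integrableOn_Ioo_of_le (by simp)]
  exact IntegrableOn.congr_fun (by simp) (eqOn_comp_natFloor_Ioo F m).symm measurableSet_Ioo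

variable {E : Type*} [NormedAddCommGroup E] [NormedSpace ℝ E] [CompleteSpace E]

lemma intervalIntegral_comp_natFloor (F : ℕ → E) (m : ℕ) :
    ∫ y in (m : ℝ)..((m + 1 : ℕ) : ℝ), F ⌊y⌋₊ = F m := by
  rw [intervalIntegral.integral_of_le (by simp), integral_Ioc_eq_integral_Ioo,
    setIntegral_congr_fun measurableSet_Ioo (eqOn_comp_natFloor_Ioo F m)]
  simp

lemma integral_comp_natFloor_mul {N : ℕ} (hN : 0 < N) (F : ℕ → E) :
    ∫ x in Set.Ico (0 : ℝ) 1, F ⌊x * N⌋₊ = (N : ℝ)⁻¹ • ∑ m ∈ Finset.range N, F m := by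
  have sum_unit_intervals := intervalIntegral.sum_integral_adjacent_intervals
    (a := fun m : ℕ => (m : ℝ)) (n := N) (μ := volume)
    fun m _ => intervalIntegrable_comp_natFloor F m
  rw [integral_Ico_eq_integral_Ioc, ← intervalIntegral.integral_of_le zero_le_one,
    intervalIntegral.integral_comp_mul_right (fun y => F ⌊y⌋₊) (by positivity), zero_mul, one_mul]
  simp only [intervalIntegral_comp_natFloor, Nat.cast_zero] at sum_unit_intervals
  rw [sum_unit_intervals]

-- Under Lebesgue measure on `[0,1)` the digits are independent and uniform.
lemma integral_prod_realDigit {b : ℕ} (hb : 0 < b) (m : ℕ) (g : ℕ → ℕ → ℂ) :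
    ∫ x in Set.Ico (0 : ℝ) 1, ∏ i ∈ Finset.range m, g i (realDigit b x i) =
      ∏ i ∈ Finset.range m, ((b : ℂ)⁻¹ * ∑ d ∈ Finset.range b, g i d) := by
  set G : ℕ → ℂ := fun M => ∏ i ∈ Finset.range m, g (m - 1 - i) (natDigit b M i) with hG
  have prod_eq_floor : Set.EqOn (fun x => ∏ i ∈ Finset.range m, g i (realDigit b x i))
      (fun x => G ⌊x * (b ^ m : ℕ)⌋₊) (Set.Ico (0 : ℝ) 1) := by
    intro x hx
    dsimp only [hG]
    rw [← Finset.prod_range_reflect]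
    refine Finset.prod_congr rfl fun i hi => ?_
    rw [Finset.mem_range] at hi
    rw [realDigit_eq_natDigit_floor hb (m := m) (by omega) hx.1]
    congr 2
    omega
  rw [setIntegral_congr_fun measurableSet_Ico prod_eq_floor,
    integral_comp_natFloor_mul (Nat.pow_pos hb) G,
    sum_range_pow_prod_natDigit b m (fun i d => g (m - 1 - i) d),
    Finset.prod_range_reflect (fun i => ∑ d ∈ Finset.range b, g i d), Finset.prod_mul_distrib]
  simp

lemma setIntegral_unitCube_prod {𝕜 : Type*} [RCLike 𝕜] {s : ℕ} (F : Fin s → ℝ → 𝕜) :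
    ∫ x in unitCube s, ∏ j, F j (x j) = ∏ j, ∫ x in Set.Ico (0 : ℝ) 1, F j x := by
  rw [unitCube, volume_pi, Measure.restrict_pi_pi, integral_fintype_prod_eq_prod]

lemma zero_mem_unitCube (s : ℕ) : (0 : Fin s → ℝ) ∈ unitCube s := by
  simp [unitCube]

lemma measurableSet_unitCube (s : ℕ) : MeasurableSet (unitCube s) :=
  MeasurableSet.univ_pi fun _ => measurableSet_Ico

instance isProbabilityMeasure_restrict_unitCube (s : ℕ) :
    IsProbabilityMeasure (volume.restrict (unitCube s)) :=
  ⟨by simp [unitCube, volume_pi_pi]⟩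

end DigitIntegrals

section WalshFunctions

/-- The root of unity `ω_b = exp (2πi / b)`. -/
def walshRoot (b : ℕ) : ℂ := Complex.exp (2 * Real.pi * Complex.I / (b : ℂ))

lemma isPrimitiveRoot_walshRoot {b : ℕ} (hb : b ≠ 0) : IsPrimitiveRoot (walshRoot b) b :=
  Complex.isPrimitiveRoot_exp b hb

lemma walshRoot_pow_self (b : ℕ) : walshRoot b ^ b = 1 := by
  rcases eq_or_ne b 0 with rfl | hb
  · exact pow_zero _
  · exact (isPrimitiveRoot_walshRoot hb).pow_eq_one

lemma norm_walshRoot (b : ℕ) : ‖walshRoot b‖ = 1 := by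
  have purely_imaginary :
      2 * Real.pi * Complex.I / (b : ℂ) = ((2 * Real.pi / b : ℝ) : ℂ) * Complex.I := by
    push_cast
    ring
  rw [walshRoot, purely_imaginary, Complex.norm_exp_ofReal_mul_I]

lemma sum_walshRoot_pow_mul_conj {b u v : ℕ} (hu : u < b) (hv : v < b) :
    ∑ d ∈ Finset.range b,
        walshRoot b ^ (d * u) * (starRingEnd ℂ) (walshRoot b ^ (d * v)) =
      if u = v then (b : ℂ) else 0 := by
  have hprim := isPrimitiveRoot_walshRoot hu.ne_bot
  have hne : walshRoot b ≠ 0 := hprim.ne_zero hu.ne_bot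
  set ρ : ℂ := walshRoot b ^ u / walshRoot b ^ v with hρ
  have term_eq (d : ℕ) :
      walshRoot b ^ (d * u) * (starRingEnd ℂ) (walshRoot b ^ (d * v)) = ρ ^ d := by
    rw [← Complex.inv_eq_conj (by rw [norm_pow, norm_walshRoot, one_pow]), hρ, div_pow,
      ← pow_mul, ← pow_mul, mul_comm u, mul_comm v, div_eq_mul_inv]
  simp only [term_eq]
  split_ifs with huv
  · simp [hρ, huv, hne]
  · have ρ_ne_one : ρ ≠ 1 := fun h =>
      huv (hprim.pow_inj hu hv ((div_eq_one_iff_eq (pow_ne_zero _ hne)).1 h))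
    have ρ_pow : ρ ^ b = 1 := by
      rw [hρ, div_pow, ← pow_mul, ← pow_mul, mul_comm u, mul_comm v, pow_mul, pow_mul,
        walshRoot_pow_self, one_pow, one_pow, div_one]
    rw [geom_sum_eq ρ_ne_one, ρ_pow, sub_self, zero_div]

lemma wal1_eq_walshRoot_pow (b k : ℕ) (x : ℝ) :
    wal1 b k x = walshRoot b ^ ∑ i ∈ Finset.range k, natDigit b k i * realDigit b x i := by
  rw [wal1, walshRoot, ← Complex.exp_nat_mul, mul_comm]

lemma wal1_eq_prod {b : ℕ} (hb : 1 < b) {k m : ℕ} (hk : k < b ^ m) (x : ℝ) :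
    wal1 b k x = ∏ i ∈ Finset.range m, walshRoot b ^ (natDigit b k i * realDigit b x i) := by
  rw [wal1_eq_walshRoot_pow, sum_range_natDigit_eq hb hk (g := fun i d => d * realDigit b x i)
    (by simp), Finset.prod_pow_eq_pow_sum]

lemma wal_zero (b : ℕ) {s : ℕ} (x : Fin s → ℝ) : wal b (0 : Fin s → ℕ) x = 1 := by
  simp [wal, wal1]

lemma norm_wal (b : ℕ) {s : ℕ} (k : Fin s → ℕ) (x : Fin s → ℝ) : ‖wal b k x‖ = 1 := by
  simp [wal, wal1_eq_walshRoot_pow, norm_prod, norm_walshRoot]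

lemma wal_pow_self (b : ℕ) {s : ℕ} (k : Fin s → ℕ) (x : Fin s → ℝ) : wal b k x ^ b = 1 := by
  simp only [wal, wal1_eq_walshRoot_pow, ← Finset.prod_pow, pow_right_comm _ _ b,
    walshRoot_pow_self, one_pow, Finset.prod_const_one]

lemma measurable_wal1 (b k : ℕ) : Measurable (wal1 b k) := by
  have exponent : Measurable fun x : ℝ =>
      ∑ i ∈ Finset.range k, natDigit b k i * realDigit b x i :=
    Finset.measurable_fun_sum _ fun i _ => (measurable_realDigit b i).const_mul _
  simpa only [funext (wal1_eq_walshRoot_pow b k)] using exponent.const_pow (walshRoot b)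

lemma measurable_wal (b : ℕ) {s : ℕ} (k : Fin s → ℕ) : Measurable (wal b k) :=
  Finset.measurable_fun_prod _ fun j _ => (measurable_wal1 b (k j)).comp (measurable_pi_apply j)

lemma integrable_wal (b : ℕ) {s : ℕ} (k : Fin s → ℕ) :
    Integrable (wal b k) (volume.restrict (unitCube s)) :=
  Integrable.of_bound (measurable_wal b k).aestronglyMeasurable 1
    (.of_forall fun x => (norm_wal b k x).le)

lemma integral_wal1_mul_conj {b : ℕ} (hb : 1 < b) (k k' : ℕ) :
    ∫ x in Set.Ico (0 : ℝ) 1, wal1 b k x * (starRingEnd ℂ) (wal1 b k' x) =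
      if k = k' then 1 else 0 := by
  obtain ⟨hk, hk'⟩ : k < b ^ (k + k') ∧ k' < b ^ (k + k') :=
    ⟨(Nat.lt_pow_self hb).trans_le (Nat.pow_le_pow_right hb.le (by omega)),
      (Nat.lt_pow_self hb).trans_le (Nat.pow_le_pow_right hb.le (by omega))⟩
  have hb0 : (b : ℂ) ≠ 0 := by exact_mod_cast (zero_lt_one.trans hb).ne'
  have digit_sum (i : ℕ) :
      (b : ℂ)⁻¹ * ∑ d ∈ Finset.range b, walshRoot b ^ (natDigit b k i * d) *
        (starRingEnd ℂ) (walshRoot b ^ (natDigit b k' i * d)) =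
      if natDigit b k i = natDigit b k' i then 1 else 0 := by
    simp only [mul_comm (natDigit b _ i)]
    rw [sum_walshRoot_pow_mul_conj (natDigit_lt hb.le k i) (natDigit_lt hb.le k' i), mul_ite,
      inv_mul_cancel₀ hb0, mul_zero]
  simp only [wal1_eq_prod hb hk, wal1_eq_prod hb hk', map_prod, ← Finset.prod_mul_distrib]
  rw [integral_prod_realDigit hb.le (k + k') fun i d => walshRoot b ^ (natDigit b k i * d) *
    (starRingEnd ℂ) (walshRoot b ^ (natDigit b k' i * d))]
  simp only [digit_sum, Finset.prod_ite_zero, Finset.prod_const_one, Finset.mem_range]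
  exact if_congr ⟨eq_of_natDigit_eq hk hk', fun h _ _ => h ▸ rfl⟩ rfl rfl

lemma integral_wal_mul_conj {b : ℕ} (hb : 1 < b) {s : ℕ} (k k' : Fin s → ℕ) :
    ∫ x in unitCube s, wal b k x * (starRingEnd ℂ) (wal b k' x) = if k = k' then 1 else 0 := by
  simp only [wal, map_prod, ← Finset.prod_mul_distrib]
  rw [setIntegral_unitCube_prod fun j y => wal1 b (k j) y * (starRingEnd ℂ) (wal1 b (k' j) y)]
  simp [integral_wal1_mul_conj hb, Finset.prod_ite_zero, funext_iff]

end WalshFunctions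

section DirichletKernel

/-- The elementary cube of side `b ^ (-l)` around `y`: the points whose coordinates share their
first `l` digits with those of `y`. -/
def elementaryCube (b l : ℕ) {s : ℕ} (y : Fin s → ℝ) : Set (Fin s → ℝ) :=
  {x | ∀ j, ∀ i < l, realDigit b (x j) i = realDigit b (y j) i}

/-- The frequencies all of whose coordinates have at most `l` digits. -/
def walshBox (b l s : ℕ) : Finset (Fin s → ℕ) :=
  Fintype.piFinset fun _ => Finset.range (b ^ l)

lemma sum_range_wal1_mul_conj {b : ℕ} (hb : 1 < b) (l : ℕ) (x y : ℝ) :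
    ∑ k ∈ Finset.range (b ^ l), wal1 b k x * (starRingEnd ℂ) (wal1 b k y) =
      if ∀ i < l, realDigit b x i = realDigit b y i then (b : ℂ) ^ l else 0 := by
  have eq_prod : ∀ k ∈ Finset.range (b ^ l), wal1 b k x * (starRingEnd ℂ) (wal1 b k y) =
      ∏ i ∈ Finset.range l, walshRoot b ^ (natDigit b k i * realDigit b x i) *
        (starRingEnd ℂ) (walshRoot b ^ (natDigit b k i * realDigit b y i)) := by
    intro k hk
    rw [wal1_eq_prod hb (Finset.mem_range.1 hk), wal1_eq_prod hb (Finset.mem_range.1 hk),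
      map_prod, Finset.prod_mul_distrib]
  rw [Finset.sum_congr rfl eq_prod, sum_range_pow_prod_natDigit b l fun i d =>
    walshRoot b ^ (d * realDigit b x i) * (starRingEnd ℂ) (walshRoot b ^ (d * realDigit b y i))]
  simp only [sum_walshRoot_pow_mul_conj (realDigit_lt hb.le x _) (realDigit_lt hb.le y _),
    Finset.prod_ite_zero, Finset.prod_const, Finset.card_range, Finset.mem_range]

lemma sum_walshBox_wal_mul_conj {b : ℕ} (hb : 1 < b) (l : ℕ) {s : ℕ} (x y : Fin s → ℝ) :
    ∑ k ∈ walshBox b l s, wal b k x * (starRingEnd ℂ) (wal b k y) =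
      (elementaryCube b l y).indicator (fun _ => (b : ℂ) ^ (l * s)) x := by
  classical
  simp only [wal, map_prod, ← Finset.prod_mul_distrib, walshBox]
  rw [← Finset.prod_univ_sum (fun _ => Finset.range (b ^ l))
    fun j k => wal1 b k (x j) * (starRingEnd ℂ) (wal1 b k (y j))]
  simp only [sum_range_wal1_mul_conj hb, Finset.prod_ite_zero, Finset.prod_const, Finset.card_univ,
    Fintype.card_fin, Finset.mem_univ, true_imp_iff, ← pow_mul, Set.indicator_apply,
    elementaryCube, Set.mem_ofPred_eq]

end DirichletKernel

section WalshPolynomials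

variable {b s : ℕ}

lemma walshCoeff_zero (b : ℕ) (f : (Fin s → ℝ) → ℝ) : walshCoeff b f 0 = (intBox s f : ℂ) := by
  simp only [walshCoeff, intBox, wal_zero, map_one, mul_one]
  exact integral_ofReal

lemma walshCoeff_neg (b : ℕ) (f : (Fin s → ℝ) → ℝ) (k : Fin s → ℕ) :
    walshCoeff b (-f) k = -walshCoeff b f k := by
  simp [walshCoeff, integral_neg]

lemma memW_neg {a : Fin s → ℝ} {f : (Fin s → ℝ) → ℝ} (hf : MemW b a f) : MemW b a (-f) := by
  refine ⟨fun x hx => ?_, by simpa only [walshCoeff_neg, norm_neg] using hf.2⟩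
  simpa only [walshCoeff_neg, neg_mul, Pi.neg_apply, Complex.ofReal_neg] using (hf.1 x hx).neg

lemma normW_neg (b : ℕ) (a : Fin s → ℝ) (f : (Fin s → ℝ) → ℝ) :
    normW b a (-f) = normW b a f := by
  simp only [normW, walshCoeff_neg, norm_neg]

variable {K : Finset (Fin s → ℕ)} {c : (Fin s → ℕ) → ℂ} {f : (Fin s → ℝ) → ℝ}

lemma walshCoeff_eq_of_eq_sum (hb : 1 < b)
    (hf : ∀ x ∈ unitCube s, (f x : ℂ) = ∑ k ∈ K, c k * wal b k x) (k' : Fin s → ℕ) :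
    walshCoeff b f k' = if k' ∈ K then c k' else 0 := by
  have integrand_eq : Set.EqOn (fun x => (f x : ℂ) * (starRingEnd ℂ) (wal b k' x))
      (fun x => ∑ k ∈ K, c k * (wal b k x * (starRingEnd ℂ) (wal b k' x))) (unitCube s) := by
    intro x hx
    simp only [hf x hx, Finset.sum_mul, mul_assoc]
  have integrable_mul (k : Fin s → ℕ) :
      Integrable (fun x => c k * (wal b k x * (starRingEnd ℂ) (wal b k' x)))
        (volume.restrict (unitCube s)) :=
    ((integrable_wal b k).mul_bdd (c := 1)
      (Complex.continuous_conj.measurable.comp (measurable_wal b k')).aestronglyMeasurable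
      (.of_forall fun x => by simp [norm_wal])).const_mul (c k)
  rw [walshCoeff, setIntegral_congr_fun (measurableSet_unitCube s) integrand_eq,
    integral_finsetSum K fun k _ => integrable_mul k]
  simp [integral_const_mul, integral_wal_mul_conj hb]

lemma norm_walshCoeff_mul_le_of_eq_sum (hb : 1 < b)
    (hf : ∀ x ∈ unitCube s, (f x : ℂ) = ∑ k ∈ K, c k * wal b k x) {a : Fin s → ℝ} {B : ℝ}
    (hB : 0 ≤ B) (hc : ∀ k ∈ K, ‖c k‖ * (b : ℝ) ^ dickWtV b a k ≤ B) (k : Fin s → ℕ) :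
    ‖walshCoeff b f k‖ * (b : ℝ) ^ dickWtV b a k ≤ B := by
  rw [walshCoeff_eq_of_eq_sum hb hf]
  split_ifs with hk
  · exact hc k hk
  · simpa using hB

lemma memW_of_eq_sum (hb : 1 < b)
    (hf : ∀ x ∈ unitCube s, (f x : ℂ) = ∑ k ∈ K, c k * wal b k x) (a : Fin s → ℝ) :
    MemW b a f := by
  refine ⟨fun x hx => ?_, ?_⟩
  · have f_eq : (f x : ℂ) = ∑ k ∈ K, walshCoeff b f k * wal b k x := by
      rw [hf x hx]
      exact Finset.sum_congr rfl fun k hk => by rw [walshCoeff_eq_of_eq_sum hb hf, if_pos hk]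
    rw [f_eq]
    exact hasSum_sum_of_ne_finset_zero fun k hk => by
      rw [walshCoeff_eq_of_eq_sum hb hf, if_neg hk, zero_mul]
  · refine ⟨∑ k ∈ K, ‖c k‖ * (b : ℝ) ^ dickWtV b a k, ?_⟩
    rintro _ ⟨k, rfl⟩
    exact norm_walshCoeff_mul_le_of_eq_sum hb hf (by positivity) (fun k hk =>
      Finset.single_le_sum (f := fun k => ‖c k‖ * (b : ℝ) ^ dickWtV b a k)
        (fun k _ => by positivity) hk) k

lemma normW_le_of_eq_sum (hb : 1 < b)
    (hf : ∀ x ∈ unitCube s, (f x : ℂ) = ∑ k ∈ K, c k * wal b k x) {a : Fin s → ℝ} {B : ℝ}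
    (hB : 0 ≤ B) (hc : ∀ k ∈ K, ‖c k‖ * (b : ℝ) ^ dickWtV b a k ≤ B) : normW b a f ≤ B :=
  ciSup_le (norm_walshCoeff_mul_le_of_eq_sum hb hf hB hc)

end WalshPolynomials

section MinimalError

/-- The `n`-th minimal worst-case error of integration in the Walsh space with weights `a`. -/
abbrev walshMinErr (b n : ℕ) {s : ℕ} (a : Fin s → ℝ) : ℝ≥0∞ :=
  minErr n s {f | MemW b a f} (normW b a)

variable {n s : ℕ} {H : Set ((Fin s → ℝ) → ℝ)} {N : ((Fin s → ℝ) → ℝ) → ℝ}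

-- The algorithm cannot distinguish the fooling function `f` from `-f`.
lemma ofReal_le_minErr_of_fooling {ε : ℝ}
    (hfool : ∀ t : Fin n → Fin s → ℝ, (∀ i, t i ∈ unitCube s) →
      ∃ f, (f ∈ H ∧ N f ≤ 1) ∧ (-f ∈ H ∧ N (-f) ≤ 1) ∧ (∀ i, f (t i) = 0) ∧ ε ≤ intBox s f) :
    ENNReal.ofReal ε ≤ minErr n s H N := by
  refine le_iInf fun t => le_iInf fun ht => le_iInf fun φ => ?_
  obtain ⟨f, hf, hnf, hvanish, hε⟩ := hfool t ht
  have le_worstErr (g : (Fin s → ℝ) → ℝ) (hg : g ∈ H ∧ N g ≤ 1) (hg0 : ∀ i, g (t i) = 0) :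
      ENNReal.ofReal |intBox s g - φ 0| ≤ worstErr s H N fun f => φ fun i => f (t i) := by
    refine le_iSup_of_le g (le_iSup_of_le hg.1 (le_iSup_of_le hg.2 ?_))
    simp only [hg0]
    rfl
  have intBox_neg : intBox s (-f) = -intBox s f := integral_neg _
  rcases le_total (φ 0) 0 with hφ | hφ
  · refine le_trans (ENNReal.ofReal_le_ofReal ?_) (le_worstErr f hf hvanish)
    exact le_trans (by linarith) (le_abs_self _)
  · refine le_trans (ENNReal.ofReal_le_ofReal ?_) (le_worstErr (-f) hnf fun i => by simp [hvanish])
    exact le_trans (by linarith) (neg_le_abs _)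

lemma minErr_le_ofReal {ι : Type*} [Fintype ι] (hι : Fintype.card ι ≤ n) {t : ι → Fin s → ℝ}
    (ht : ∀ i, t i ∈ unitCube s) (φ : (ι → ℝ) → ℝ) {ε : ℝ}
    (herr : ∀ f ∈ H, N f ≤ 1 → |intBox s f - φ fun i => f (t i)| ≤ ε) :
    minErr n s H N ≤ ENNReal.ofReal ε := by
  obtain ⟨e⟩ : Nonempty (ι ↪ Fin n) := Function.Embedding.nonempty_of_card_le (by simpa using hι)
  have extend_mem (q : Fin n) : Function.extend e t 0 q ∈ unitCube s := by
    by_cases hq : ∃ i, e i = q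
    · obtain ⟨i, rfl⟩ := hq
      rw [e.injective.extend_apply]
      exact ht i
    · rw [Function.extend_apply' _ _ _ hq]
      exact zero_mem_unitCube s
  refine iInf_le_of_le (Function.extend e t 0) (iInf_le_of_le extend_mem
    (iInf_le_of_le (fun v => φ fun i => v (e i)) ?_))
  refine iSup_le fun f => iSup_le fun hf => iSup_le fun hN => ENNReal.ofReal_le_ofReal ?_
  simpa only [e.injective.extend_apply] using herr f hf hN

end MinimalError

section LowerBound

variable {b s : ℕ}

lemma floor_eq_of_mem_elementaryCube (hb : 0 < b) {l : ℕ} {x y : Fin s → ℝ}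
    (hx : x ∈ unitCube s) (hy : y ∈ unitCube s) (hxy : x ∈ elementaryCube b l y) (j : Fin s) :
    ⌊x j * (b ^ l : ℕ)⌋₊ = ⌊y j * (b ^ l : ℕ)⌋₊ := by
  have hbl : (0 : ℝ) < (b ^ l : ℕ) := by exact_mod_cast Nat.pow_pos hb
  have floor_lt {z : ℝ} (hz : z < 1) : ⌊z * (b ^ l : ℕ)⌋₊ < b ^ l :=
    (Nat.floor_lt' (Nat.pow_pos hb).ne').2 (mul_lt_of_lt_one_left hbl hz)
  refine eq_of_natDigit_eq (floor_lt (hx j trivial).2) (floor_lt (hy j trivial).2) fun i hi => ?_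
  have digit_eq := hxy j (l - 1 - i) (by omega)
  rwa [realDigit_eq_natDigit_floor hb (m := l) (by omega) (hx j trivial).1,
    realDigit_eq_natDigit_floor hb (m := l) (by omega) (hy j trivial).1,
    show l - 1 - (l - 1 - i) = i by omega] at digit_eq

lemma exists_forall_notMem_elementaryCube (hb : 0 < b) {n l : ℕ} (hn : n < b ^ (l * s))
    {t : Fin n → Fin s → ℝ} (ht : ∀ q, t q ∈ unitCube s) :
    ∃ y, ∀ q, t q ∉ elementaryCube b l y := by
  by_contra! hcover
  have hbl : (0 : ℝ) < (b ^ l : ℕ) := by exact_mod_cast Nat.pow_pos hb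
  set corner : (Fin s → Fin (b ^ l)) → Fin s → ℝ := fun m j => (m j : ℝ) / (b ^ l : ℕ)
    with hcorner
  have corner_mem (m : Fin s → Fin (b ^ l)) : corner m ∈ unitCube s := fun j _ =>
    ⟨by positivity, (div_lt_one hbl).2 (by exact_mod_cast (m j).2)⟩
  choose q hq using fun m => hcover (corner m)
  have q_injective : Function.Injective q := by
    intro m m' hmm
    funext j
    have floor_eq := (floor_eq_of_mem_elementaryCube hb (ht _) (corner_mem m) (hq m) j).symm.trans
      (hmm ▸ floor_eq_of_mem_elementaryCube hb (ht _) (corner_mem m') (hq m') j)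
    simpa only [hcorner, div_mul_cancel₀ _ hbl.ne', Nat.floor_natCast, Fin.val_inj] using floor_eq
  have card_le := Fintype.card_le_of_injective q q_injective
  simp only [Fintype.card_fun, Fintype.card_fin, ← pow_mul] at card_le
  omega

lemma ofReal_rpow_neg_le_walshMinErr (hb : 1 < b) {n l : ℕ} (hn : n < b ^ (l * s))
    {a : Fin s → ℝ} {M : ℝ} (hM : ∀ k ∈ walshBox b l s, dickWtV b a k ≤ M) :
    ENNReal.ofReal ((b : ℝ) ^ (-M)) ≤ walshMinErr b n a := by
  have hb0 : (0 : ℝ) < b := by exact_mod_cast zero_lt_one.trans hb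
  refine ofReal_le_minErr_of_fooling fun t ht => ?_
  obtain ⟨y, hy⟩ := exists_forall_notMem_elementaryCube (zero_lt_one.trans hb) hn ht
  set f : (Fin s → ℝ) → ℝ :=
    (elementaryCube b l y).indicator fun _ => (b : ℝ) ^ (-M) * (b : ℝ) ^ (l * s) with hf
  set c : (Fin s → ℕ) → ℂ := fun k => ((b : ℝ) ^ (-M) : ℝ) * (starRingEnd ℂ) (wal b k y) with hc
  have f_eq_sum : ∀ x ∈ unitCube s, (f x : ℂ) = ∑ k ∈ walshBox b l s, c k * wal b k x := by
    intro x _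
    simp only [hc, mul_assoc, mul_comm ((starRingEnd ℂ) _), ← Finset.mul_sum,
      sum_walshBox_wal_mul_conj hb, hf]
    by_cases hx : x ∈ elementaryCube b l y <;> simp [hx]
  have c_bound : ∀ k ∈ walshBox b l s, ‖c k‖ * (b : ℝ) ^ dickWtV b a k ≤ 1 := by
    intro k hk
    rw [hc, norm_mul, Complex.norm_real, RCLike.norm_conj, norm_wal, mul_one,
      Real.norm_of_nonneg (by positivity), ← Real.rpow_add hb0]
    exact Real.rpow_le_one_of_one_le_of_nonpos (by exact_mod_cast hb.le) (by linarith [hM k hk])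
  have zero_mem : (0 : Fin s → ℕ) ∈ walshBox b l s := by
    simp [walshBox, Nat.pow_pos (zero_lt_one.trans hb)]
  have intBox_eq : intBox s f = (b : ℝ) ^ (-M) := by
    rw [← Complex.ofReal_inj, ← walshCoeff_zero b, walshCoeff_eq_of_eq_sum hb f_eq_sum,
      if_pos zero_mem]
    simp [hc, wal_zero]
  have hfW : MemW b a f := memW_of_eq_sum hb f_eq_sum a
  have hfN : normW b a f ≤ 1 := normW_le_of_eq_sum hb f_eq_sum zero_le_one c_bound
  exact ⟨f, ⟨hfW, hfN⟩, ⟨memW_neg hfW, (normW_neg b a f).trans_le hfN⟩,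
    fun q => Set.indicator_of_notMem (hy q) _, intBox_eq.ge⟩

end LowerBound

section DickWeight

variable {b : ℕ}

lemma dickWt_eq_sum_range (hb : 1 < b) (a : ℝ) {k m : ℕ} (hk : k < b ^ m) :
    dickWt b a k =
      ∑ i ∈ Finset.range m, if natDigit b k i ≠ 0 then ((i : ℝ) + 1 + a) else 0 :=
  sum_range_natDigit_eq hb hk (g := fun i d => if d ≠ 0 then ((i : ℝ) + 1 + a) else 0) (by simp)

lemma dickWt_le (hb : 1 < b) {a α : ℝ} (hα : 0 ≤ α) (haα : a ≤ α) {k l : ℕ} (hk : k < b ^ l) :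
    dickWt b a k ≤ l * (l + α) := by
  rw [dickWt_eq_sum_range hb a hk]
  calc ∑ i ∈ Finset.range l, (if natDigit b k i ≠ 0 then ((i : ℝ) + 1 + a) else 0)
      ≤ ∑ _i ∈ Finset.range l, (l + α : ℝ) := by
        refine Finset.sum_le_sum fun i hi => ?_
        have hil : (i : ℝ) + 1 ≤ l := by exact_mod_cast Finset.mem_range.1 hi
        split_ifs
        · linarith
        · positivity
    _ = l * (l + α) := by rw [Finset.sum_const, Finset.card_range, nsmul_eq_mul]

lemma dickWtV_le_of_mem_walshBox (hb : 1 < b) {s l : ℕ} {a : Fin s → ℝ} {α : ℝ} (hα : 0 ≤ α)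
    (haα : ∀ j, a j ≤ α) {k : Fin s → ℕ} (hk : k ∈ walshBox b l s) :
    dickWtV b a k ≤ s * (l * (l + α)) := by
  have hk' : ∀ j, k j < b ^ l := by simpa [walshBox] using hk
  calc dickWtV b a k ≤ ∑ _j : Fin s, (l * (l + α) : ℝ) :=
        Finset.sum_le_sum fun j _ => dickWt_le hb hα (haα j) (hk' j)
    _ = s * (l * (l + α)) := by simp

end DickWeight

section GrowthOfWeights

variable {b : ℕ} {a : ℕ → ℝ} {p A C c : ℝ}

lemma mul_log_rpow_le_of_walshMinErr_le (hb : 1 < b) {s l n : ℕ} (hn : n < b ^ (l * s))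
    {a : Fin s → ℝ} {α : ℝ} (hα : 0 ≤ α) (haα : ∀ j, a j ≤ α) (hC : 0 < C)
    (herr : walshMinErr b n a ≤
      ENNReal.ofReal (C * Real.exp (A * s) * Real.exp (-c * Real.log n ^ p))) :
    c * Real.log n ^ p ≤ Real.log C + A * s + s * (l * (l + α)) * Real.log b := by
  have hb0 : (0 : ℝ) < b := by exact_mod_cast zero_lt_one.trans hb
  have lower_le_upper := (ofReal_rpow_neg_le_walshMinErr hb hn fun _ =>
    dickWtV_le_of_mem_walshBox hb hα haα).trans herr
  rw [ENNReal.ofReal_le_ofReal_iff (by positivity)] at lower_le_upper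
  have log_le := Real.log_le_log (by positivity) lower_le_upper
  rw [Real.log_rpow hb0, Real.log_mul (by positivity) (by positivity),
    Real.log_mul hC.ne' (by positivity), Real.log_exp, Real.log_exp] at log_le
  linarith

lemma le_of_mul_mul_le_box_weight {X L g α l s : ℝ} (hA : 0 ≤ A) (hg : 0 ≤ g) (hα : 0 ≤ α)
    (hl : 1 ≤ l) (hs : 1 ≤ s)
    (h : X * (l * s) ≤ L + A * s + s * ((l + 1) * (l + 1 + α)) * g) :
    X ≤ (|L| + A + 4 * g) * l + 2 * g * α := by
  have box_side : (l + 1) * (l + 1 + α) ≤ l * (4 * l + 2 * α) := by nlinarith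
  have divided_by_ls : X ≤ |L| + A + (4 * l + 2 * α) * g := by
    refine le_of_mul_le_mul_right ?_ (by positivity : 0 < l * s)
    calc X * (l * s) ≤ |L| + A * s + s * (l * (4 * l + 2 * α)) * g := by
          grw [h, box_side, le_abs_self L]
      _ ≤ |L| * (l * s) + A * (l * s) + s * (l * (4 * l + 2 * α)) * g := by
          gcongr
          · exact le_mul_of_one_le_right (abs_nonneg _) (one_le_mul_of_one_le_of_one_le hl hs)
          · exact le_mul_of_one_le_left (by positivity) hl
      _ = (|L| + A + (4 * l + 2 * α) * g) * (l * s) := by ring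
  have : |L| + A ≤ (|L| + A) * l := le_mul_of_one_le_right (by positivity) hl
  linarith

lemma mul_rpow_le_of_walshMinErr_le (hb : 1 < b) (ha : Monotone a) (hA : 0 ≤ A) (hC : 0 < C)
    (herr : ∀ s n : ℕ, 0 < s → 0 < n → walshMinErr b n (fun j : Fin s => a j) ≤
      ENNReal.ofReal (C * Real.exp (A * s) * Real.exp (-c * Real.log n ^ p)))
    (j : ℕ) {l : ℕ} (hl : 0 < l) :
    c * Real.log b ^ p * ((l : ℝ) * (j + 1)) ^ (p - 1) ≤
      (|Real.log C| + A + 4 * Real.log b) * l + 2 * Real.log b * max (a j) 0 := by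
  have haα (i : Fin (j + 1)) : a i ≤ max (a j) 0 :=
    (ha (Nat.lt_succ_iff.1 i.2)).trans (le_max_left _ _)
  have hlog : 0 < Real.log b := Real.log_pos (by exact_mod_cast hb)
  have log_bound := mul_log_rpow_le_of_walshMinErr_le hb (l := l + 1) (n := b ^ (l * (j + 1)))
    (Nat.pow_lt_pow_right hb (by nlinarith)) (le_max_right _ _) haα hC
    (herr (j + 1) _ j.succ_pos (Nat.pow_pos (zero_lt_one.trans hb)))
  have log_pow : Real.log (b ^ (l * (j + 1)) : ℕ) ^ p =
      Real.log b ^ p * ((l : ℝ) * (j + 1)) ^ (p - 1) * (l * (j + 1)) := by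
    rw [Nat.cast_pow, Real.log_pow, mul_comm, Real.mul_rpow hlog.le (by positivity), mul_assoc,
      ← Real.rpow_add_one (by positivity), sub_add_cancel]
    push_cast
    rfl
  refine le_of_mul_mul_le_box_weight (s := j + 1) hA hlog.le (le_max_right _ _)
    (by exact_mod_cast hl) (by simp) ?_
  rw [log_pow] at log_bound
  push_cast at log_bound
  linarith

lemma mul_le_mul_rpow_of_le {K l J : ℝ} (hK : 0 < K) (hl : 0 < l) (hJ : 0 < J) (hp2 : p < 2)
    (hlJ : l ≤ K ^ (-(1 / (2 - p))) * J ^ ((p - 1) / (2 - p))) :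
    K * l ≤ (l * J) ^ (p - 1) := by
  have h2p : 0 < 2 - p := by linarith
  have l_rpow_le : l ^ (2 - p) ≤ K⁻¹ * J ^ (p - 1) := by
    calc l ^ (2 - p) ≤ (K ^ (-(1 / (2 - p))) * J ^ ((p - 1) / (2 - p))) ^ (2 - p) :=
          Real.rpow_le_rpow hl.le hlJ h2p.le
      _ = K⁻¹ * J ^ (p - 1) := by
          rw [Real.mul_rpow (by positivity) (by positivity), ← Real.rpow_mul hK.le,
            ← Real.rpow_mul hJ.le, neg_mul, one_div_mul_cancel h2p.ne', Real.rpow_neg_one,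
            div_mul_cancel₀ _ h2p.ne']
  calc K * l = K * (l ^ (p - 1) * l ^ (2 - p)) := by
        rw [← Real.rpow_add hl]
        norm_num
    _ ≤ K * (l ^ (p - 1) * (K⁻¹ * J ^ (p - 1))) := by gcongr
    _ = (l * J) ^ (p - 1) := by
        rw [Real.mul_rpow hl.le hJ.le]
        field_simp

-- With `l ≈ δ (j + 1) ^ ((p - 1) / (2 - p))` the left side of `h` exceeds `(β + γ) l`.
lemma exists_eventually_mul_rpow_le {κ β γ : ℝ} (hκ : 0 < κ) (hβ : 0 ≤ β) (hγ : 0 < γ)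
    (hp1 : 1 < p) (hp2 : p < 2)
    (h : ∀ j l : ℕ, 0 < l → κ * ((l : ℝ) * (j + 1)) ^ (p - 1) ≤ β * l + γ * max (a j) 0) :
    ∃ c : ℝ, 0 < c ∧ ∀ᶠ j : ℕ in atTop, c * ((j : ℝ) + 1) ^ ((p - 1) / (2 - p)) ≤ a j := by
  set q := (p - 1) / (2 - p)
  have hq : 0 < q := div_pos (by linarith) (by linarith)
  have hK : 0 < (β + γ) / κ := by positivity
  set δ := ((β + γ) / κ) ^ (-(1 / (2 - p)))
  have hδ0 : 0 < δ := by positivity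
  have tendsto_top : Tendsto (fun j : ℕ => δ * ((j : ℝ) + 1) ^ q) atTop atTop :=
    ((tendsto_rpow_atTop hq).comp (tendsto_atTop_add_const_right _ _
      tendsto_natCast_atTop_atTop)).const_mul_atTop hδ0
  refine ⟨δ / 2, by positivity, ?_⟩
  filter_upwards [tendsto_top.eventually_ge_atTop 1] with j hj
  set X := δ * ((j : ℝ) + 1) ^ q
  have hl : 0 < ⌊X⌋₊ := Nat.floor_pos.2 hj
  have hl1 : (1 : ℝ) ≤ ⌊X⌋₊ := by exact_mod_cast hl
  have left_ge := mul_le_mul_rpow_of_le hK (by positivity) (by positivity) hp2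
    (Nat.floor_le (by positivity : 0 ≤ X))
  rw [div_mul_eq_mul_div, div_le_iff₀' hκ] at left_ge
  have floor_le_max : (⌊X⌋₊ : ℝ) ≤ max (a j) 0 := by nlinarith [h j ⌊X⌋₊ hl]
  have floor_le : (⌊X⌋₊ : ℝ) ≤ a j := (le_max_iff.1 floor_le_max).resolve_right (by linarith)
  linarith [Nat.lt_floor_add_one X]

lemma exists_eventually_mul_rpow_le_of_walshMinErr_le (hb : 1 < b) (ha : Monotone a)
    (hp1 : 1 < p) (hp2 : p < 2) (hA : 0 ≤ A) (hC : 0 < C) (hc : 0 < c)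
    (herr : ∀ s n : ℕ, 0 < s → 0 < n → walshMinErr b n (fun j : Fin s => a j) ≤
      ENNReal.ofReal (C * Real.exp (A * s) * Real.exp (-c * Real.log n ^ p))) :
    ∃ c : ℝ, 0 < c ∧ ∀ᶠ j : ℕ in atTop, c * ((j : ℝ) + 1) ^ ((p - 1) / (2 - p)) ≤ a j := by
  have hlog : 0 < Real.log b := Real.log_pos (by exact_mod_cast hb)
  exact exists_eventually_mul_rpow_le (κ := c * Real.log b ^ p) (by positivity)
    (β := |Real.log C| + A + 4 * Real.log b) (by positivity) (γ := 2 * Real.log b) (by positivity)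
    hp1 hp2 fun j _ hl => mul_rpow_le_of_walshMinErr_le hb ha hA hC herr j hl

end GrowthOfWeights

section Quadrature

universe u

-- Tchakaloff: the mean of `v` lies in the convex hull of the image of `S`, so Carathéodory's
-- theorem represents it by at most `finrank ℝ E + 1` points.
lemma exists_convexCombination_eq_integral {α : Type*} {E : Type u} [MeasurableSpace α]
    {μ : Measure α} [IsProbabilityMeasure μ] [NormedAddCommGroup E] [NormedSpace ℝ E]
    [FiniteDimensional ℝ E] {v : α → E} (hv : Integrable v μ) {S : Set α} (hS : ∀ᵐ x ∂μ, x ∈ S)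
    (hfin : (v '' S).Finite) :
    ∃ (ι : Type u) (_ : Fintype ι) (t : ι → α) (w : ι → ℝ),
      Fintype.card ι ≤ Module.finrank ℝ E + 1 ∧ (∀ i, t i ∈ S) ∧ (∀ i, 0 ≤ w i) ∧
        ∑ i, w i = 1 ∧ ∑ i, w i • v (t i) = ∫ x, v x ∂μ := by
  have integral_mem : ∫ x, v x ∂μ ∈ convexHull ℝ (v '' S) :=
    (convex_convexHull ℝ _).integral_mem (hfin.isClosed_convexHull (𝕜 := ℝ))
      (hS.mono fun x hx => subset_convexHull ℝ _ ⟨x, hx, rfl⟩) hv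
  obtain ⟨ι, _, z, w, hz, hindep, hw_pos, hw_sum, hsum⟩ :=
    eq_pos_convex_span_of_mem_convexHull integral_mem
  choose t htS htz using fun i => hz ⟨i, rfl⟩
  have card_le : Fintype.card ι ≤ Module.finrank ℝ E + 1 :=
    hindep.card_le_finrank_succ.trans (Nat.succ_le_succ (Submodule.finrank_le _))
  exact ⟨ι, inferInstance, t, w, card_le, htS, fun i => (hw_pos i).le, hw_sum, by simpa only [htz]⟩

variable {b n s : ℕ}

lemma finite_image_wal (hb : 0 < b) (K : Finset (Fin s → ℕ)) (S : Set (Fin s → ℝ)) :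
    ((fun x (k : K) => wal b k.1 x) '' S).Finite := by
  have finite_roots : {z : ℂ | z ^ b = 1}.Finite :=
    (Polynomial.nthRootsFinset b (1 : ℂ)).finite_toSet.subset fun z hz =>
      (Polynomial.mem_nthRootsFinset hb 1).2 hz
  refine (Set.Finite.pi' fun _ : K => finite_roots).subset ?_
  rintro _ ⟨x, _, rfl⟩ k
  exact wal_pow_self b k.1 x

lemma integral_wal (hb : 1 < b) (k : Fin s → ℕ) :
    ∫ x in unitCube s, wal b k x = if k = 0 then 1 else 0 := by
  simpa [wal_zero] using integral_wal_mul_conj hb k 0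

lemma exists_quadrature_exact_on_wal (hb : 1 < b) (K : Finset (Fin s → ℕ)) :
    ∃ (ι : Type) (_ : Fintype ι) (t : ι → Fin s → ℝ) (w : ι → ℝ),
      Fintype.card ι ≤ 2 * K.card + 1 ∧ (∀ i, t i ∈ unitCube s) ∧ (∀ i, 0 ≤ w i) ∧
        ∑ i, w i = 1 ∧ ∀ k ∈ K, ∑ i, (w i : ℂ) * wal b k (t i) = if k = 0 then 1 else 0 := by
  have integrable_vec : Integrable (fun x (k : K) => wal b k.1 x)
      (volume.restrict (unitCube s)) :=
    Integrable.of_eval fun k => integrable_wal b k.1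
  obtain ⟨ι, _, t, w, hcard, ht, hw, hw_sum, hsum⟩ := exists_convexCombination_eq_integral
    integrable_vec (ae_restrict_mem (measurableSet_unitCube s))
    (finite_image_wal (zero_lt_one.trans hb) K _)
  have finrank_eq : Module.finrank ℝ (K → ℂ) = 2 * K.card := by
    simp [Module.finrank_pi_fintype, Complex.finrank_real_complex, mul_comm]
  refine ⟨ι, inferInstance, t, w, by rwa [finrank_eq] at hcard, ht, hw, hw_sum, fun k hk => ?_⟩
  have eval_eq := congrFun hsum ⟨k, hk⟩
  rw [eval_integral fun k : K => integrable_wal b k.1, integral_wal hb] at eval_eq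
  simpa only [Finset.sum_apply, Pi.smul_apply, Complex.real_smul] using eval_eq

lemma norm_walshCoeff_le (hb : 0 < b) {a : Fin s → ℝ} {f : (Fin s → ℝ) → ℝ} (hf : MemW b a f)
    (hN : normW b a f ≤ 1) (k : Fin s → ℕ) :
    ‖walshCoeff b f k‖ ≤ (b : ℝ) ^ (-dickWtV b a k) := by
  have hb0 : (0 : ℝ) < b := by exact_mod_cast hb
  rw [Real.rpow_neg hb0.le, ← one_div, le_div_iff₀ (by positivity)]
  exact (le_ciSup hf.2 k).trans hN

lemma dickWtV_zero (b : ℕ) (a : Fin s → ℝ) : dickWtV b a 0 = 0 := by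
  simp [dickWtV, dickWt]

lemma walshMinErr_le_one (hb : 0 < b) (n : ℕ) (a : Fin s → ℝ) : walshMinErr b n a ≤ 1 := by
  rw [← ENNReal.ofReal_one]
  refine minErr_le_ofReal (ι := Empty) (by simp) (t := Empty.elim) (by simp) (fun _ => 0)
    fun f hf hN => ?_
  simpa [walshCoeff_zero, dickWtV_zero] using norm_walshCoeff_le hb hf hN 0

lemma hasSum_walshCoeff_mul_quadrature {ι : Type*} [Fintype ι] {t : ι → Fin s → ℝ}
    (ht : ∀ i, t i ∈ unitCube s) (w : ι → ℝ) {a : Fin s → ℝ} {f : (Fin s → ℝ) → ℝ}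
    (hf : MemW b a f) :
    HasSum (fun k => walshCoeff b f k * ∑ i, (w i : ℂ) * wal b k (t i))
      ((∑ i, w i * f (t i) : ℝ) : ℂ) := by
  simp only [Complex.ofReal_sum, Complex.ofReal_mul, Finset.mul_sum,
    mul_left_comm (walshCoeff b f _)]
  exact hasSum_sum fun i _ => (hf.1 (t i) (ht i)).mul_left (w i : ℂ)

lemma norm_sum_mul_wal_le {ι : Type*} [Fintype ι] (t : ι → Fin s → ℝ) {w : ι → ℝ}
    (hw : ∀ i, 0 ≤ w i) (k : Fin s → ℕ) : ‖∑ i, (w i : ℂ) * wal b k (t i)‖ ≤ ∑ i, w i := by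
  refine (norm_sum_le _ _).trans_eq (Finset.sum_congr rfl fun i _ => ?_)
  rw [norm_mul, norm_wal, mul_one, Complex.norm_real, Real.norm_of_nonneg (hw i)]

lemma walshMinErr_le_tsum_compl (hb : 1 < b) {a : Fin s → ℝ} {K : Finset (Fin s → ℕ)}
    (hn : 2 * K.card + 1 ≤ n) (hsum : Summable fun k => (b : ℝ) ^ (-dickWtV b a k)) :
    walshMinErr b n a ≤
      ENNReal.ofReal (∑' k, (K : Set (Fin s → ℕ))ᶜ.indicator
        (fun k => (b : ℝ) ^ (-dickWtV b a k)) k) := by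
  obtain ⟨ι, _, t, w, hcard, ht, hw, hw_sum, hexact⟩ := exists_quadrature_exact_on_wal hb K
  refine minErr_le_ofReal (hcard.trans hn) ht (fun v => ∑ i, w i * v i) fun f hf hN => ?_
  set S : (Fin s → ℕ) → ℂ := fun k => ∑ i, (w i : ℂ) * wal b k (t i)
  have S_zero : S 0 = 1 := by
    simp only [S, wal_zero, mul_one]
    exact_mod_cast hw_sum
  have hasSum_intBox : HasSum (fun k => walshCoeff b f k * if k = 0 then 1 else 0)
      (intBox s f : ℂ) := by
    simpa [walshCoeff_zero] using
      hasSum_single (f := fun k => walshCoeff b f k * if k = 0 then 1 else 0) 0 (by simp_all)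
  have hasSum_error := hasSum_intBox.sub (hasSum_walshCoeff_mul_quadrature ht w hf)
  have term_le (k : Fin s → ℕ) :
      ‖walshCoeff b f k * (if k = 0 then 1 else 0) - walshCoeff b f k * S k‖ ≤
        (K : Set (Fin s → ℕ))ᶜ.indicator (fun k => (b : ℝ) ^ (-dickWtV b a k)) k := by
    by_cases hk : k ∈ K
    · simp [S, hexact k hk, hk]
    · rw [Set.indicator_of_mem (by simpa using hk), ← mul_sub, norm_mul]
      refine (mul_le_of_le_one_right (norm_nonneg _) ?_).trans
        (norm_walshCoeff_le (zero_lt_one.trans hb) hf hN k)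
      split_ifs with hk0
      · simp [hk0, S_zero]
      · simpa [hw_sum] using norm_sum_mul_wal_le t hw k
  have error_le := tsum_of_norm_bounded (hsum.indicator _).hasSum term_le
  rw [hasSum_error.tsum_eq, ← Complex.ofReal_sub, Complex.norm_real] at error_le
  exact error_le

end Quadrature

section ExponentialSums

lemma sum_range_exp_neg_mul_rpow_le {q y : ℝ} (hq : 0 < q) (hy : 0 < y) (m : ℕ) :
    ∑ i ∈ Finset.range m, Real.exp (-y * ((i : ℝ) + 1) ^ q) ≤
      y ^ (-1 / q) * Real.Gamma (1 / q + 1) := by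
  have antitone_exp : AntitoneOn (fun x : ℝ => Real.exp (-y * x ^ q)) (Set.Icc 0 (0 + m)) := by
    intro x hx z _ hxz
    have hx0 : 0 ≤ x := hx.1
    simp only [neg_mul]
    gcongr
  have integrable_exp : IntegrableOn (fun x : ℝ => Real.exp (-y * x ^ q)) (Set.Ioi 0) := by
    simpa using integrableOn_rpow_mul_exp_neg_mul_rpow (s := 0) (by norm_num) hq hy
  calc ∑ i ∈ Finset.range m, Real.exp (-y * ((i : ℝ) + 1) ^ q)
      ≤ ∫ x in (0 : ℝ)..0 + m, Real.exp (-y * x ^ q) := by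
        simpa using antitone_exp.sum_le_integral
    _ ≤ ∫ x in Set.Ioi 0, Real.exp (-y * x ^ q) := by
        rw [intervalIntegral.integral_of_le (by simp)]
        exact setIntegral_mono_set integrable_exp (.of_forall fun _ => (Real.exp_pos _).le)
          Set.Ioc_subset_Ioi_self.eventuallyLE
    _ = y ^ (-1 / q) * Real.Gamma (1 / q + 1) := integral_exp_neg_mul_rpow hq hy

lemma sum_range_rpow_neg_mul_le {β t : ℝ} (hβ : 1 < β) (ht : 0 < t) (m : ℕ) :
    ∑ i ∈ Finset.range m, β ^ (-(t * ((i : ℝ) + 1))) ≤ 1 / (t * Real.log β) := by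
  have hlog : 0 < Real.log β := Real.log_pos hβ
  calc ∑ i ∈ Finset.range m, β ^ (-(t * ((i : ℝ) + 1)))
      = ∑ i ∈ Finset.range m, Real.exp (-(t * Real.log β) * ((i : ℝ) + 1) ^ (1 : ℝ)) := by
        refine Finset.sum_congr rfl fun i _ => ?_
        rw [Real.rpow_def_of_pos (by linarith), Real.rpow_one]
        ring_nf
    _ ≤ 1 / (t * Real.log β) := by
        simpa [Real.Gamma_two, Real.rpow_neg_one, one_add_one_eq_two] using
          sum_range_exp_neg_mul_rpow_le one_pos (mul_pos ht hlog) m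

end ExponentialSums

section DickZeta

variable {b s : ℕ} {t : ℝ}

/-- The Dirichlet-type series `∑ₖ b ^ (-t μ_a(k))` of the Dick weight, which controls both the
number of frequencies of small weight and the tail of the Walsh series. -/
def dickZeta (b : ℕ) (a : Fin s → ℝ) (t : ℝ) : ℝ :=
  ∑' k, (b : ℝ) ^ (-(t * dickWtV b a k))

lemma rpow_neg_dickWt_eq_prod (hb : 1 < b) (a t : ℝ) {k m : ℕ} (hk : k < b ^ m) :
    (b : ℝ) ^ (-(t * dickWt b a k)) =
      ∏ i ∈ Finset.range m,
        if natDigit b k i ≠ 0 then (b : ℝ) ^ (-(t * ((i : ℝ) + 1 + a))) else 1 := by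
  have hb0 : (0 : ℝ) < b := by exact_mod_cast zero_lt_one.trans hb
  rw [dickWt_eq_sum_range hb a hk, Finset.mul_sum, ← Finset.sum_neg_distrib,
    Real.rpow_sum_of_pos hb0]
  refine Finset.prod_congr rfl fun i _ => ?_
  split_ifs <;> simp

lemma sum_range_ite_ne_zero_le (b : ℕ) {x : ℝ} (hx : 0 ≤ x) :
    ∑ d ∈ Finset.range b, (if d ≠ 0 then x else 1) ≤ 1 + b * x := by
  cases b with
  | zero => simp
  | succ d =>
    rw [Finset.sum_range_succ']
    simp only [ne_eq, Nat.add_eq_zero_iff, one_ne_zero, and_false, not_false_eq_true, if_true,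
      not_true_eq_false, if_false, Finset.sum_const, Finset.card_range, nsmul_eq_mul]
    push_cast
    linarith

lemma sum_range_rpow_neg_dickWt_le (hb : 1 < b) (ht : 0 < t) (a : ℝ) (m : ℕ) :
    ∑ k ∈ Finset.range (b ^ m), (b : ℝ) ^ (-(t * dickWt b a k)) ≤
      Real.exp (b / (t * Real.log b) * (b : ℝ) ^ (-(t * a))) := by
  have hb1 : (1 : ℝ) < b := by exact_mod_cast hb
  have hb0 : (0 : ℝ) < b := one_pos.trans hb1
  calc ∑ k ∈ Finset.range (b ^ m), (b : ℝ) ^ (-(t * dickWt b a k))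
      = ∏ i ∈ Finset.range m, ∑ d ∈ Finset.range b,
          if d ≠ 0 then (b : ℝ) ^ (-(t * ((i : ℝ) + 1 + a))) else 1 := by
        rw [← sum_range_pow_prod_natDigit]
        exact Finset.sum_congr rfl fun k hk =>
          rpow_neg_dickWt_eq_prod hb a t (Finset.mem_range.1 hk)
    _ ≤ ∏ i ∈ Finset.range m, Real.exp (b * (b : ℝ) ^ (-(t * ((i : ℝ) + 1 + a)))) := by
        refine Finset.prod_le_prod (fun i _ => Finset.sum_nonneg fun d _ => by positivity)
          fun i _ => (sum_range_ite_ne_zero_le b (by positivity)).trans ?_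
        linarith [Real.add_one_le_exp (b * (b : ℝ) ^ (-(t * ((i : ℝ) + 1 + a))))]
    _ = Real.exp (b * (b : ℝ) ^ (-(t * a)) *
          ∑ i ∈ Finset.range m, (b : ℝ) ^ (-(t * ((i : ℝ) + 1)))) := by
        rw [← Real.exp_sum, Finset.mul_sum]
        congr 1
        refine Finset.sum_congr rfl fun i _ => ?_
        rw [mul_assoc, ← Real.rpow_add hb0]
        ring_nf
    _ ≤ Real.exp (b * (b : ℝ) ^ (-(t * a)) * (1 / (t * Real.log b))) := by
        gcongr
        exact sum_range_rpow_neg_mul_le hb1 ht m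
    _ = Real.exp (b / (t * Real.log b) * (b : ℝ) ^ (-(t * a))) := by ring_nf

lemma sum_walshBox_rpow_neg_dickWtV (hb : 0 < b) (a : Fin s → ℝ) (t : ℝ) (m : ℕ) :
    ∑ k ∈ walshBox b m s, (b : ℝ) ^ (-(t * dickWtV b a k)) =
      ∏ j, ∑ k ∈ Finset.range (b ^ m), (b : ℝ) ^ (-(t * dickWt b (a j) k)) := by
  have hb0 : (0 : ℝ) < b := by exact_mod_cast hb
  rw [Finset.prod_univ_sum]
  refine Finset.sum_congr rfl fun k _ => ?_
  rw [dickWtV, Finset.mul_sum, ← Finset.sum_neg_distrib, Real.rpow_sum_of_pos hb0]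

lemma exists_subset_walshBox (hb : 1 < b) (F : Finset (Fin s → ℕ)) :
    ∃ m, F ⊆ walshBox b m s := by
  obtain ⟨M, hM⟩ := F.bddAbove
  refine ⟨∑ j, M j, fun k hk => ?_⟩
  have hk_lt (j : Fin s) : k j < b ^ ∑ i, M i :=
    ((hM hk j).trans (Finset.single_le_sum (fun _ _ => Nat.zero_le _) (Finset.mem_univ j))).trans_lt
      (Nat.lt_pow_self hb)
  simpa [walshBox] using hk_lt

lemma sum_rpow_neg_dickWtV_le (hb : 1 < b) (ht : 0 < t) (a : Fin s → ℝ)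
    (F : Finset (Fin s → ℕ)) :
    ∑ k ∈ F, (b : ℝ) ^ (-(t * dickWtV b a k)) ≤
      Real.exp (b / (t * Real.log b) * ∑ j, (b : ℝ) ^ (-(t * a j))) := by
  obtain ⟨m, hm⟩ := exists_subset_walshBox hb F
  calc ∑ k ∈ F, (b : ℝ) ^ (-(t * dickWtV b a k))
      ≤ ∑ k ∈ walshBox b m s, (b : ℝ) ^ (-(t * dickWtV b a k)) :=
        Finset.sum_le_sum_of_subset_of_nonneg hm fun _ _ _ => by positivity
    _ = ∏ j, ∑ k ∈ Finset.range (b ^ m), (b : ℝ) ^ (-(t * dickWt b (a j) k)) :=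
        sum_walshBox_rpow_neg_dickWtV (zero_lt_one.trans hb) a t m
    _ ≤ ∏ j, Real.exp (b / (t * Real.log b) * (b : ℝ) ^ (-(t * a j))) :=
        Finset.prod_le_prod (fun _ _ => by positivity) fun j _ =>
          sum_range_rpow_neg_dickWt_le hb ht (a j) m
    _ = Real.exp (b / (t * Real.log b) * ∑ j, (b : ℝ) ^ (-(t * a j))) := by
        rw [← Real.exp_sum, Finset.mul_sum]

lemma summable_rpow_neg_dickWtV (hb : 1 < b) (ht : 0 < t) (a : Fin s → ℝ) :
    Summable fun k => (b : ℝ) ^ (-(t * dickWtV b a k)) :=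
  summable_of_sum_le (fun _ => by positivity) (sum_rpow_neg_dickWtV_le hb ht a)

lemma dickZeta_le (hb : 1 < b) (ht : 0 < t) (a : Fin s → ℝ) :
    dickZeta b a t ≤ Real.exp (b / (t * Real.log b) * ∑ j, (b : ℝ) ^ (-(t * a j))) :=
  (summable_rpow_neg_dickWtV hb ht a).tsum_le_of_sum_le (sum_rpow_neg_dickWtV_le hb ht a)

end DickZeta

section Rankin

variable {κ : Type*} {β t T : ℝ} {μ : κ → ℝ}

lemma finite_setOf_le_of_summable_rpow (hβ : 1 < β) (ht : 0 ≤ t)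
    (hsum : Summable fun k => β ^ (-(t * μ k))) (T : ℝ) : {k | μ k ≤ T}.Finite := by
  have eventually_lt : ∀ᶠ k in cofinite, β ^ (-(t * μ k)) < β ^ (-(t * T)) :=
    hsum.tendsto_cofinite_zero.eventually_lt_const (Real.rpow_pos_of_pos (one_pos.trans hβ) _)
  refine Set.Finite.subset eventually_lt fun k (hk : μ k ≤ T) =>
    Set.mem_compl fun hlt : β ^ (-(t * μ k)) < β ^ (-(t * T)) => hlt.not_ge ?_
  gcongr
  exact hβ.le

lemma card_le_rpow_mul_tsum (hβ : 1 < β) (ht : 0 ≤ t)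
    (hsum : Summable fun k => β ^ (-(t * μ k))) {F : Finset κ} (hF : ∀ k ∈ F, μ k ≤ T) :
    (F.card : ℝ) ≤ β ^ (t * T) * ∑' k, β ^ (-(t * μ k)) := by
  have hβ0 : 0 < β := one_pos.trans hβ
  calc (F.card : ℝ) = ∑ _k ∈ F, (1 : ℝ) := by simp
    _ ≤ ∑ k ∈ F, β ^ (t * T) * β ^ (-(t * μ k)) := by
        refine Finset.sum_le_sum fun k hk => ?_
        rw [← Real.rpow_add hβ0]
        refine Real.one_le_rpow hβ.le ?_
        linarith [mul_le_mul_of_nonneg_left (hF k hk) ht]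
    _ = β ^ (t * T) * ∑ k ∈ F, β ^ (-(t * μ k)) := (Finset.mul_sum ..).symm
    _ ≤ β ^ (t * T) * ∑' k, β ^ (-(t * μ k)) := by
        gcongr
        exact hsum.sum_le_tsum F fun _ _ => by positivity

lemma tsum_indicator_rpow_le (hβ : 1 < β) (ht : t ≤ 1)
    (hsum : Summable fun k => β ^ (-(t * μ k))) (T : ℝ) :
    ∑' k, {k | T < μ k}.indicator (fun k => β ^ (-μ k)) k ≤
      β ^ (-((1 - t) * T)) * ∑' k, β ^ (-(t * μ k)) := by
  have hβ0 : 0 < β := one_pos.trans hβ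
  have term_le (k : κ) : {k | T < μ k}.indicator (fun k => β ^ (-μ k)) k ≤
      β ^ (-((1 - t) * T)) * β ^ (-(t * μ k)) := by
    refine Set.indicator_apply_le' (fun (hk : T < μ k) => ?_) fun _ => by positivity
    rw [← Real.rpow_add hβ0]
    exact Real.rpow_le_rpow_of_exponent_le hβ.le (by nlinarith)
  have hsum' := hsum.mul_left (β ^ (-((1 - t) * T)))
  rw [← tsum_mul_left]
  exact (hsum'.of_nonneg_of_le (fun k => Set.indicator_nonneg (fun _ _ => by positivity) k)
    term_le).tsum_le_tsum term_le hsum'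

end Rankin

section UpperBound

variable {b : ℕ}

lemma walshMinErr_le_of_dickZeta_le (hb : 1 < b) {n s : ℕ} {a : Fin s → ℝ} {t T : ℝ} (ht : 0 < t)
    (hn : 2 * ((b : ℝ) ^ (t * T) * dickZeta b a t) + 1 ≤ n) :
    walshMinErr b n a ≤ ENNReal.ofReal ((b : ℝ) ^ (-(T / 2)) * dickZeta b a (1 / 2)) := by
  have hb1 : (1 : ℝ) < b := by exact_mod_cast hb
  have hsum {t : ℝ} (ht : 0 < t) := summable_rpow_neg_dickWtV hb ht a
  have finite_low : {k | dickWtV b a k ≤ T}.Finite :=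
    finite_setOf_le_of_summable_rpow hb1 ht.le (hsum ht) T
  have card_low_le : (finite_low.toFinset.card : ℝ) ≤ (b : ℝ) ^ (t * T) * dickZeta b a t :=
    card_le_rpow_mul_tsum hb1 ht.le (hsum ht) (by simp)
  have hcard : 2 * finite_low.toFinset.card + 1 ≤ n := by
    have hcard' : (2 * finite_low.toFinset.card + 1 : ℝ) ≤ n := by linarith
    exact_mod_cast hcard'
  have tail_eq : (finite_low.toFinset : Set (Fin s → ℕ))ᶜ = {k | T < dickWtV b a k} := by
    ext k
    simp
  refine (walshMinErr_le_tsum_compl hb hcard (by simpa using hsum one_pos)).trans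
    (ENNReal.ofReal_le_ofReal ?_)
  rw [tail_eq, show T / 2 = (1 - 1 / 2) * T by ring]
  exact tsum_indicator_rpow_le hb1 (by norm_num) (hsum one_half_pos) T

lemma walshMinErr_le_of_dickZeta_le_exp (hb : 1 < b) {n s : ℕ} {a : Fin s → ℝ} {p D u : ℝ}
    (hp : 1 < p) (hD : 0 ≤ D)
    (hζ : ∀ t, 0 < t → t ≤ 1 → dickZeta b a t ≤ Real.exp (D * t ^ (-(1 / (p - 1)))))
    (hu : 1 ≤ u) (hn : Real.exp ((Real.log b + D + 2) * u) ≤ n) :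
    walshMinErr b n a ≤ ENNReal.ofReal ((b : ℝ) ^ (-(u ^ p / 2)) * dickZeta b a (1 / 2)) := by
  have hb0 : (0 : ℝ) < b := by exact_mod_cast zero_lt_one.trans hb
  have hlog : 0 < Real.log b := Real.log_pos (by exact_mod_cast hb)
  have hu0 : 0 < u := one_pos.trans_le hu
  set t := u ^ (1 - p)
  have ht0 : 0 < t := by positivity
  have ht1 : t ≤ 1 := Real.rpow_le_one_of_one_le_of_nonpos hu (by linarith)
  have mul_eq : t * u ^ p = u := by rw [← Real.rpow_add hu0, sub_add_cancel, Real.rpow_one]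
  have rpow_eq : t ^ (-(1 / (p - 1))) = u := by
    have exponent_eq : (1 - p) * -(1 / (p - 1)) = 1 := by
      have hp0 : p - 1 ≠ 0 := (sub_pos.2 hp).ne'
      field_simp
      ring
    rw [← Real.rpow_mul hu0.le, exponent_eq, Real.rpow_one]
  refine walshMinErr_le_of_dickZeta_le hb ht0 (le_trans ?_ hn)
  have hζt := hζ t ht0 ht1
  rw [rpow_eq] at hζt
  calc 2 * ((b : ℝ) ^ (t * u ^ p) * dickZeta b a t) + 1
      ≤ 2 * (Real.exp (Real.log b * u) * Real.exp (D * u)) + 1 := by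
        rw [mul_eq, Real.rpow_def_of_pos hb0]
        gcongr
    _ = 2 * Real.exp ((Real.log b + D) * u) + 1 := by rw [← Real.exp_add, add_mul]
    _ ≤ Real.exp ((Real.log b + D) * u) * Real.exp (2 * u) := by
        nlinarith [Real.add_one_le_exp (2 * u),
          Real.one_le_exp (show 0 ≤ (Real.log b + D) * u by positivity)]
    _ = Real.exp ((Real.log b + D + 2) * u) := by rw [← Real.exp_add, ← add_mul]

lemma exists_walshMinErr_le_of_dickZeta_le_exp (hb : 1 < b) {p D : ℝ} (hp : 1 < p) (hD : 0 ≤ D) :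
    ∃ C c : ℝ, 0 < C ∧ 0 < c ∧ ∀ (s : ℕ) (a : Fin s → ℝ),
      (∀ t, 0 < t → t ≤ 1 → dickZeta b a t ≤ Real.exp (D * t ^ (-(1 / (p - 1))))) →
        ∀ n : ℕ, 0 < n → walshMinErr b n a ≤
          ENNReal.ofReal (C * Real.exp (-c * Real.log n ^ p)) := by
  have hb0 : (0 : ℝ) < b := by exact_mod_cast zero_lt_one.trans hb
  have hlog : 0 < Real.log b := Real.log_pos (by exact_mod_cast hb)
  set L := Real.log b + D + 2
  have hL : 0 < L := by positivity
  set Z := Real.exp (D * (1 / 2) ^ (-(1 / (p - 1))))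
  refine ⟨max Z (b ^ (1 / 2 : ℝ)), Real.log b / (2 * L ^ p), by positivity, by positivity,
    fun s a hζ n hn => ?_⟩
  set u := Real.log n / L
  have decay_eq : Real.exp (-(Real.log b / (2 * L ^ p)) * Real.log n ^ p) =
      (b : ℝ) ^ (-(u ^ p / 2)) := by
    rw [Real.rpow_def_of_pos hb0, Real.div_rpow (Real.log_natCast_nonneg n) hL.le]
    congr 1
    field_simp
  rw [decay_eq]
  rcases le_total 1 u with hu | hu
  · have exp_mul_u : Real.exp (L * u) = n := by
      rw [mul_div_cancel₀ _ hL.ne', Real.exp_log (by exact_mod_cast hn)]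
    refine (walshMinErr_le_of_dickZeta_le_exp hb hp hD hζ hu exp_mul_u.le).trans
      (ENNReal.ofReal_le_ofReal ?_)
    rw [mul_comm]
    gcongr
    exact (hζ (1 / 2) (by norm_num) (by norm_num)).trans (le_max_left ..)
  · refine (walshMinErr_le_one (zero_lt_one.trans hb) n a).trans (ENNReal.one_le_ofReal.2 ?_)
    calc (1 : ℝ) ≤ (b : ℝ) ^ (1 / 2 - u ^ p / 2) := by
          have hu0 : 0 ≤ u := div_nonneg (Real.log_natCast_nonneg n) hL.le
          refine Real.one_le_rpow (by exact_mod_cast hb.le) ?_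
          linarith [Real.rpow_le_one hu0 hu (zero_lt_one.trans hp).le]
      _ = (b : ℝ) ^ (1 / 2 : ℝ) * (b : ℝ) ^ (-(u ^ p / 2)) := by
          rw [← Real.rpow_add hb0, sub_eq_add_neg]
      _ ≤ max Z (b ^ (1 / 2 : ℝ)) * (b : ℝ) ^ (-(u ^ p / 2)) := by
          gcongr
          exact le_max_right ..

end UpperBound

section PolynomialWeights

variable {b : ℕ} {a : ℕ → ℝ} {p q c : ℝ}

lemma exists_forall_le_add_of_eventually_le {g a : ℕ → ℝ} (h : ∀ᶠ j in atTop, g j ≤ a j) :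
    ∃ B : ℝ, 0 ≤ B ∧ ∀ j, g j ≤ a j + B := by
  have bounded : IsBoundedUnder (· ≤ ·) atTop fun j => g j - a j :=
    ⟨0, eventually_map.2 (h.mono fun j hj => sub_nonpos.2 hj)⟩
  obtain ⟨B, hB⟩ := bounded.bddAbove_range
  refine ⟨max B 0, le_max_right .., fun j => ?_⟩
  linarith [hB ⟨j, rfl⟩, le_max_left B 0]

lemma exists_sum_rpow_neg_mul_le {β : ℝ} (hβ : 1 < β) (hq : 0 < q) (hc : 0 < c)
    (ha : ∀ᶠ j : ℕ in atTop, c * ((j : ℝ) + 1) ^ q ≤ a j) :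
    ∃ D : ℝ, 0 < D ∧ ∀ t, 0 < t → t ≤ 1 → ∀ s : ℕ,
      ∑ j ∈ Finset.range s, β ^ (-(t * a j)) ≤ D * t ^ (-(1 / q)) := by
  obtain ⟨B, hB, ha_ge⟩ := exists_forall_le_add_of_eventually_le ha
  have hβ0 : 0 < β := one_pos.trans hβ
  have hlog : 0 < Real.log β := Real.log_pos hβ
  refine ⟨β ^ B * ((c * Real.log β) ^ (-1 / q) * Real.Gamma (1 / q + 1)), by positivity,
    fun t ht ht1 s => ?_⟩
  have term_le (j : ℕ) :
      β ^ (-(t * a j)) ≤ β ^ B * Real.exp (-(t * (c * Real.log β)) * ((j : ℝ) + 1) ^ q) := by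
    rw [Real.rpow_def_of_pos hβ0, Real.rpow_def_of_pos hβ0, ← Real.exp_add]
    refine Real.exp_le_exp.2 ?_
    have exponent_le : -(t * a j) ≤ B - t * (c * ((j : ℝ) + 1) ^ q) := by
      nlinarith [mul_le_mul_of_nonneg_left (ha_ge j) ht.le]
    linarith [mul_le_mul_of_nonneg_left exponent_le hlog.le]
  calc ∑ j ∈ Finset.range s, β ^ (-(t * a j))
      ≤ β ^ B * ∑ j ∈ Finset.range s, Real.exp (-(t * (c * Real.log β)) * ((j : ℝ) + 1) ^ q) := by
        rw [Finset.mul_sum]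
        exact Finset.sum_le_sum fun j _ => term_le j
    _ ≤ β ^ B * ((t * (c * Real.log β)) ^ (-1 / q) * Real.Gamma (1 / q + 1)) := by
        gcongr
        exact sum_range_exp_neg_mul_rpow_le hq (by positivity) s
    _ = β ^ B * ((c * Real.log β) ^ (-1 / q) * Real.Gamma (1 / q + 1)) * t ^ (-(1 / q)) := by
        rw [Real.mul_rpow ht.le (by positivity), ← neg_div]
        ring

lemma exists_dickZeta_le_exp (hb : 1 < b) (hq : 0 < q) (hc : 0 < c)
    (ha : ∀ᶠ j : ℕ in atTop, c * ((j : ℝ) + 1) ^ q ≤ a j) :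
    ∃ D : ℝ, 0 < D ∧ ∀ (s : ℕ) (t : ℝ), 0 < t → t ≤ 1 →
      dickZeta b (fun j : Fin s => a j) t ≤ Real.exp (D * t ^ (-(1 / q + 1))) := by
  have hb1 : (1 : ℝ) < b := by exact_mod_cast hb
  have hlog : 0 < Real.log b := Real.log_pos hb1
  obtain ⟨D, hD, hsum⟩ := exists_sum_rpow_neg_mul_le hb1 hq hc ha
  refine ⟨b / Real.log b * D, by positivity, fun s t ht ht1 => (dickZeta_le hb ht _).trans ?_⟩
  refine Real.exp_le_exp.2 ?_
  rw [Fin.sum_univ_eq_sum_range (fun j => (b : ℝ) ^ (-(t * a j))) s]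
  calc b / (t * Real.log b) * ∑ j ∈ Finset.range s, (b : ℝ) ^ (-(t * a j))
      ≤ b / (t * Real.log b) * (D * t ^ (-(1 / q))) := by
        gcongr
        exact hsum t ht ht1 s
    _ = b / Real.log b * D * t ^ (-(1 / q + 1)) := by
        rw [neg_add, Real.rpow_add ht, Real.rpow_neg_one]
        field_simp

lemma exists_walshMinErr_le_of_eventually_mul_rpow_le (hb : 1 < b) (hp1 : 1 < p) (hp2 : p < 2)
    (hc : 0 < c) (ha : ∀ᶠ j : ℕ in atTop, c * ((j : ℝ) + 1) ^ ((p - 1) / (2 - p)) ≤ a j) :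
    ∃ C c : ℝ, 0 < C ∧ 0 < c ∧ ∀ s n : ℕ, 0 < n →
      walshMinErr b n (fun j : Fin s => a j) ≤
        ENNReal.ofReal (C * Real.exp (-c * Real.log n ^ p)) := by
  have hp1' : 0 < p - 1 := sub_pos.2 hp1
  have hp2' : 0 < 2 - p := sub_pos.2 hp2
  have exponent_eq : 1 / ((p - 1) / (2 - p)) + 1 = 1 / (p - 1) := by
    field_simp
    ring
  obtain ⟨D, hD, hζ⟩ := exists_dickZeta_le_exp hb (div_pos hp1' hp2') hc ha
  rw [exponent_eq] at hζ
  obtain ⟨C, c, hC, hc, herr⟩ := exists_walshMinErr_le_of_dickZeta_le_exp hb hp1 hD.le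
  exact ⟨C, c, hC, hc, fun s n hn => herr s _ (hζ s) n hn⟩

end PolynomialWeights

lemma le_ofReal_mul_exp_of_le_ofReal {x : ℝ≥0∞} {A C y : ℝ} (hA : 0 ≤ A) (hC : 0 ≤ C) (s : ℕ)
    (hx : x ≤ ENNReal.ofReal (C * Real.exp y)) :
    x ≤ ENNReal.ofReal (C * Real.exp (A * s) * Real.exp y) := by
  refine hx.trans (ENNReal.ofReal_le_ofReal ?_)
  gcongr
  exact le_mul_of_one_le_right hC (Real.one_le_exp (by positivity))

/-- for `1 < p < 2`, the equivalence of (a) `liminf_j a_j/j^{(p-1)/(2-p)} > 0`,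
(b) super-polynomial convergence with factor `exp(A·s)`, and (c) the same without any
dependence on `s`, for integration in the Walsh space `W_{s,a}`.
(The sequence `a` is indexed from `0`, i.e. `a (j-1)` is the paper's `a_j`.) -/
theorem statement2 (b : ℕ) (hb : 2 ≤ b) (a : ℕ → ℝ) (ha : Monotone a)
    (p : ℝ) (hp1 : 1 < p) (hp2 : p < 2) :
    ((∃ c : ℝ, 0 < c ∧ ∀ᶠ j : ℕ in Filter.atTop,
        c * ((j : ℝ) + 1) ^ ((p - 1) / (2 - p)) ≤ a j) ↔
      (∃ A C c : ℝ, 0 < A ∧ 0 < C ∧ 0 < c ∧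
        ∀ s n : ℕ, 0 < s → 0 < n →
          minErr n s {f | MemW b (fun j : Fin s => a j) f} (normW b (fun j : Fin s => a j)) ≤
            ENNReal.ofReal (C * Real.exp (A * s) * Real.exp (-c * (Real.log n) ^ p)))) ∧
    ((∃ A C c : ℝ, 0 < A ∧ 0 < C ∧ 0 < c ∧
        ∀ s n : ℕ, 0 < s → 0 < n →
          minErr n s {f | MemW b (fun j : Fin s => a j) f} (normW b (fun j : Fin s => a j)) ≤
            ENNReal.ofReal (C * Real.exp (A * s) * Real.exp (-c * (Real.log n) ^ p))) ↔
      (∃ C c : ℝ, 0 < C ∧ 0 < c ∧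
        ∀ s n : ℕ, 0 < s → 0 < n →
          minErr n s {f | MemW b (fun j : Fin s => a j) f} (normW b (fun j : Fin s => a j)) ≤
            ENNReal.ofReal (C * Real.exp (-c * (Real.log n) ^ p)))) := by
  refine ⟨⟨?a_imp_b, ?b_imp_a⟩, ⟨?b_imp_c, ?c_imp_b⟩⟩
  case a_imp_b =>
    rintro ⟨c₀, hc₀, hac⟩
    obtain ⟨C, c, hC, hc, herr⟩ :=
      exists_walshMinErr_le_of_eventually_mul_rpow_le hb hp1 hp2 hc₀ hac
    exact ⟨1, C, c, one_pos, hC, hc, fun s n _ hn =>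
      le_ofReal_mul_exp_of_le_ofReal zero_le_one hC.le s (herr s n hn)⟩
  case b_imp_a =>
    rintro ⟨A, C, c, hA, hC, hc, herr⟩
    exact exists_eventually_mul_rpow_le_of_walshMinErr_le hb ha hp1 hp2 hA.le hC hc herr
  case b_imp_c =>
    rintro ⟨A, C, c, hA, hC, hc, herr⟩
    obtain ⟨c₀, hc₀, hac⟩ :=
      exists_eventually_mul_rpow_le_of_walshMinErr_le hb ha hp1 hp2 hA.le hC hc herr
    obtain ⟨C', c', hC', hc', herr'⟩ :=
      exists_walshMinErr_le_of_eventually_mul_rpow_le hb hp1 hp2 hc₀ hac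
    exact ⟨C', c', hC', hc', fun s n _ hn => herr' s n hn⟩
  case c_imp_b =>
    rintro ⟨C, c, hC, hc, herr⟩
    exact ⟨1, C, c, one_pos, hC, hc, fun s n hs hn =>
      le_ofReal_mul_exp_of_le_ofReal zero_le_one hC.le s (herr s n hs hn)⟩

end
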